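/- Let D be a triangulated category and let f_• : (a_•, d_•) → (b_•, e_•) be a morphism between two bounded complexes a_m → ... → a_0 and b_m → ... → b_0 in D, each satisfying Hom_D(a_p[r], a_q) = 0 and Hom_D(b_p[r], b_q) = 0 for p > q, r > 0. Let d : a → a_m and e : b → b_m be left convolutions of these complexes and let ε : a' → a be a morphism. Assume in addition that Hom_D(a_p[r], b_q) = 0 for all p > q and r > 0. Then there exists a morphism f : a' → b with e ∘ f = f_m ∘ d ∘ ε. Moreover, f is unique with this property if Hom_D(a'[r], b_q) = 0 for all q and all r > 0. -/

import Mathlib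

/-!
Statement 3.

Let `f_• : (a_•, d_•) → (b_•, e_•)` be a morphism between two bounded complexes
`a_m → ... → a_0` and `b_m → ... → b_0` in a triangulated category `D`, each satisfying
the vanishing `Hom(a_p[r], a_q) = 0` resp. `Hom(b_p[r], b_q) = 0` for `p > q`, `r > 0`.
Let `d : a → a_m` and `e : b → b_m` be left convolutions and `ε : a' → a` a morphism.
If moreover `Hom(a_p[r], b_q) = 0` for `p > q`, `r > 0`, then there is `f : a' → b` with
`e ∘ f = f_m ∘ d ∘ ε`; it is unique with this property if `Hom(a'[r], b_q) = 0` for all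
`q` and `r > 0`.

Complexes are encoded with *bottom-up* indexing: `a p` is `a_p` and
`da p : a (p+1) ⟶ a p` is the differential `d_{p+1}`; a morphism of complexes is a family
`f p : a p ⟶ b p` with `e_p ∘ f_p = f_{p-1} ∘ d_p`.  The predicate `IsLeftConvolution`
follows the inductive construction of left convolutions from the paper.
-/

open CategoryTheory CategoryTheory.Limits CategoryTheory.Pretriangulated

universe v u

variable {D : Type u} [Category.{v} D] [HasZeroObject D] [HasShift D ℤ]
  [Preadditive D] [∀ n : ℤ, (CategoryTheory.shiftFunctor D n).Additive] [Pretriangulated D]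

/-- The objects of the complex obtained by replacing the two bottom terms of `a` by `x`. -/
def truncObj (a : ℕ → D) (x : D) : ℕ → D
  | 0 => x
  | k + 1 => a (k + 2)

/-- The differentials of the shortened complex. -/
def truncMap (a : ℕ → D) (d : ∀ i, a (i + 1) ⟶ a i) (x : D) (d₂ : a 2 ⟶ x) :
    ∀ i, truncObj a x (i + 1) ⟶ truncObj a x i
  | 0 => d₂
  | k + 1 => d (k + 2)

/-- `IsLeftConvolution m a d c e` : the morphism `e : c ⟶ a m` is a left convolution of
the length-`m` complex `a` (bottom-up indexing). -/
inductive IsLeftConvolution :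
    ∀ (m : ℕ) (a : ℕ → D) (_ : ∀ i, a (i + 1) ⟶ a i) (c : D), (c ⟶ a m) → Prop
  | zero (a : ℕ → D) (d : ∀ i, a (i + 1) ⟶ a i) :
      IsLeftConvolution 0 a d (a 0) (𝟙 (a 0))
  | one (a : ℕ → D) (d : ∀ i, a (i + 1) ⟶ a i) (x : D) (j : x ⟶ a 1)
      (δ : a 0 ⟶ x⟦(1 : ℤ)⟧)
      (_ : Triangle.mk j (d 0) δ ∈ distTriang D) :
      IsLeftConvolution 1 a d x j
  | step (m : ℕ) (a : ℕ → D) (d : ∀ i, a (i + 1) ⟶ a i) (x : D) (j : x ⟶ a 1)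
      (δ : a 0 ⟶ x⟦(1 : ℤ)⟧)
      (_ : Triangle.mk j (d 0) δ ∈ distTriang D)
      (d₂ : a 2 ⟶ x) (_ : d₂ ≫ j = d 1)
      (c : D) (e : c ⟶ a (m + 2))
      (_ : IsLeftConvolution (m + 1) (truncObj a x) (truncMap a d x d₂) c e) :
      IsLeftConvolution (m + 2) a d c e

/-!
A left convolution is reached by repeatedly passing to the fibre of the bottom differential. A
morphism of complexes induces a morphism between the fibres, and the squares of the shortened
complexes commute because a morphism into a fibre `x ⟶ b 1 ⟶ b 0` is determined by its composite
with `x ⟶ b 1` as soon as its source has no nonzero morphism of degree `-1` to `b 0`. Each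
truncation adds one to the shift against which the bottom term is tested, so the only groups that
matter are `Hom(X⟦r⟧, b q)` with `r` complementary to `q`: `q + r = m` for `X = a'`, and
`q + r = p - 1` for `X = a p`.
-/

theorem hom_ext_of_distTriang {T : Triangle D} (hT : T ∈ distTriang D) {X : D}
    (h : ∀ g : X⟦(1 : ℤ)⟧ ⟶ T.obj₃, g = 0) {u v : X ⟶ T.obj₁}
    (huv : u ≫ T.mor₁ = v ≫ T.mor₁) : u = v := by
  have hzero : (u - v)⟦(1 : ℤ)⟧' ≫ T.mor₁⟦(1 : ℤ)⟧' = 0 := by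
    rw [← Functor.map_comp, Preadditive.sub_comp, huv, sub_self, Functor.map_zero]
  obtain ⟨g, hg⟩ := Triangle.coyoneda_exact₁ T hT _ hzero
  rw [h g, zero_comp] at hg
  exact sub_eq_zero.mp ((Functor.map_eq_zero_iff _).mp hg)

theorem hom_shift_obj₁_eq_zero {T : Triangle D} (hT : T ∈ distTriang D) {X : D} {r : ℤ}
    (h₂ : ∀ g : X⟦r⟧ ⟶ T.obj₂, g = 0) (h₃ : ∀ g : X⟦r + 1⟧ ⟶ T.obj₃, g = 0)
    (u : X⟦r⟧ ⟶ T.obj₁) : u = 0 := by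
  have h₃' : ∀ g : X⟦r⟧⟦(1 : ℤ)⟧ ⟶ T.obj₃, g = 0 := fun g => by
    rw [← cancel_epi ((shiftFunctorAdd D r 1).hom.app X), comp_zero]
    exact h₃ _
  exact hom_ext_of_distTriang hT h₃' ((h₂ _).trans zero_comp.symm)

/-- The vanishing of `Hom(X⟦r⟧, b q)` for all `r > 0` with `q + r = n`. This is what controls
morphisms from `X` to a left convolution of `b n ⟶ ⋯ ⟶ b 0`; the shift `r` is a separate variable
so that `n - q` never appears in a type. -/
def DiagonalHomVanishing (X : D) (b : ℕ → D) (n : ℕ) : Prop :=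
  ∀ (q : ℕ) (r : ℤ), 0 < r → q + r = n → ∀ g : X⟦r⟧ ⟶ b q, g = 0

theorem DiagonalHomVanishing.truncObj {X : D} {b : ℕ → D} {n : ℕ} {x : D} {j : x ⟶ b 1}
    {d : b 1 ⟶ b 0} {δ : b 0 ⟶ x⟦(1 : ℤ)⟧} (hX : DiagonalHomVanishing X b (n + 1))
    (hT : Triangle.mk j d δ ∈ distTriang D) :
    DiagonalHomVanishing X (truncObj b x) n
  | 0, r, hr, hn => hom_shift_obj₁_eq_zero hT
      (hX 1 r hr (by omega)) (hX 0 (r + 1) (by omega) (by omega))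
  | q + 1, r, hr, hn => hX (q + 2) r hr (by omega)

section

variable {C : Type u} [Category.{v} C]

/-- The family of morphisms between shortened complexes given by `g` on the new bottom term and by
`f` on the remaining ones. -/
def truncHom {a b : ℕ → C} {x y : C} (f : ∀ p, a p ⟶ b p) (g : x ⟶ y) :
    ∀ p, truncObj a x p ⟶ truncObj b y p
  | 0 => g
  | k + 1 => f (k + 2)

theorem truncMap_comp_truncHom {m : ℕ} {a b : ℕ → C} {da : ∀ i, a (i + 1) ⟶ a i}
    {db : ∀ i, b (i + 1) ⟶ b i} {f : ∀ p, a p ⟶ b p}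
    (hf : ∀ p, p < m + 1 → da p ≫ f p = f (p + 1) ≫ db p)
    {x y : C} {dx : a 2 ⟶ x} {dy : b 2 ⟶ y} {g : x ⟶ y} (hg : dx ≫ g = f 2 ≫ dy) :
    ∀ p, p < m →
      truncMap a da x dx p ≫ truncHom f g p = truncHom f g (p + 1) ≫ truncMap b db y dy p
  | 0, _ => hg
  | p + 1, hp => hf (p + 2) (by omega)

end

namespace IsLeftConvolution

theorem hom_ext {m : ℕ} {b : ℕ → D} {db : ∀ i, b (i + 1) ⟶ b i} {c : D} {e : c ⟶ b m}
    (hc : IsLeftConvolution m b db c e) {X : D} (hX : DiagonalHomVanishing X b m)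
    {u v : X ⟶ c} (huv : u ≫ e = v ≫ e) : u = v := by
  induction hc with
  | zero => simpa only [Category.comp_id] using huv
  | one b db x j δ hT => exact hom_ext_of_distTriang hT (hX 0 1 one_pos (by simp)) huv
  | step m b db x j δ hT _ _ c e _ ih => exact ih (hX.truncObj hT) huv

theorem exists_hom {m : ℕ} {a b : ℕ → D} {da : ∀ i, a (i + 1) ⟶ a i}
    {db : ∀ i, b (i + 1) ⟶ b i} {ca cb : D} {dconv : ca ⟶ a m} {econv : cb ⟶ b m}
    (hca : IsLeftConvolution m a da ca dconv) (hcb : IsLeftConvolution m b db cb econv)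
    (f : ∀ p, a p ⟶ b p) (hf : ∀ p, p < m → da p ≫ f p = f (p + 1) ≫ db p)
    (hab : ∀ p, p < m → DiagonalHomVanishing (a (p + 1)) b p) :
    ∃ φ : ca ⟶ cb, φ ≫ econv = dconv ≫ f m := by
  induction hca generalizing b cb with
  | zero a da =>
    cases hcb
    exact ⟨f 0, by rw [Category.comp_id, Category.id_comp]⟩
  | one a da x j δ hT =>
    obtain _ | ⟨_, _, _, _, _, hT'⟩ := hcb
    obtain ⟨g, hg, -⟩ :=
      complete_distinguished_triangle_morphism₁ _ _ hT hT' (f 1) (f 0) (hf 0 one_pos)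
    exact ⟨g, hg.symm⟩
  | step m a da x j δ hT dx hdx ca dconv _ ih =>
    obtain _ | _ | ⟨_, _, _, y, j', _, hT', dy, hdy, _, _, hcb⟩ := hcb
    obtain ⟨g, hg⟩ : ∃ g : x ⟶ y, j ≫ f 1 = g ≫ j' :=
      (complete_distinguished_triangle_morphism₁ _ _ hT hT' (f 1) (f 0)
        (hf 0 (by omega))).imp fun _ h => h.1
    have hcomp : (dx ≫ g) ≫ j' = (f 2 ≫ dy) ≫ j' := by
      rw [Category.assoc, ← hg, reassoc_of% hdx, Category.assoc, hdy, hf 1 (by omega)]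
    have hsquare : dx ≫ g = f 2 ≫ dy :=
      hom_ext_of_distTriang hT' (hab 1 (by omega) 0 1 one_pos (by simp)) hcomp
    exact ih hcb (truncHom f g) (truncMap_comp_truncHom hf hsquare)
      fun p hp => (hab (p + 1) (by omega)).truncObj hT'

end IsLeftConvolution

theorem hom_of_left_convolutions_general {m : ℕ} {a b : ℕ → D} {da : ∀ i, a (i + 1) ⟶ a i}
    {db : ∀ i, b (i + 1) ⟶ b i} {f : ∀ p, a p ⟶ b p}
    (hf : ∀ p, p < m → da p ≫ f p = f (p + 1) ≫ db p)
    {ca cb : D} {dconv : ca ⟶ a m} {econv : cb ⟶ b m}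
    (hca : IsLeftConvolution m a da ca dconv) (hcb : IsLeftConvolution m b db cb econv)
    {a' : D} (ε : a' ⟶ ca)
    (hab : ∀ p, p < m → DiagonalHomVanishing (a (p + 1)) b p) :
    (∃ φ : a' ⟶ cb, φ ≫ econv = ε ≫ dconv ≫ f m) ∧
    (DiagonalHomVanishing a' b m →
      ∀ φ₁ φ₂ : a' ⟶ cb, φ₁ ≫ econv = ε ≫ dconv ≫ f m →
        φ₂ ≫ econv = ε ≫ dconv ≫ f m → φ₁ = φ₂) := by
  obtain ⟨φ, hφ⟩ := hca.exists_hom hcb f hf hab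
  exact ⟨⟨ε ≫ φ, by rw [Category.assoc, hφ]⟩,
    fun ha' _ _ h₁ h₂ => hcb.hom_ext ha' (h₁.trans h₂.symm)⟩

/-- Existence (and conditional uniqueness) of a morphism between left
convolutions induced by a morphism of complexes, after composition with `ε : a' ⟶ a`. -/
theorem hom_of_left_convolutions
    (m : ℕ) (a : ℕ → D) (da : ∀ i, a (i + 1) ⟶ a i)
    (b : ℕ → D) (db : ∀ i, b (i + 1) ⟶ b i)
    (hcomplexa : ∀ i, i + 2 ≤ m → da (i + 1) ≫ da i = 0)
    (hcomplexb : ∀ i, i + 2 ≤ m → db (i + 1) ≫ db i = 0)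
    (hvanisha : ∀ p q, q < p → p ≤ m → ∀ r : ℤ, 0 < r → ∀ f : (a p)⟦r⟧ ⟶ a q, f = 0)
    (hvanishb : ∀ p q, q < p → p ≤ m → ∀ r : ℤ, 0 < r → ∀ f : (b p)⟦r⟧ ⟶ b q, f = 0)
    -- the morphism of complexes `f_•`
    (f : ∀ p, a p ⟶ b p)
    (hf : ∀ p, p < m → da p ≫ f p = f (p + 1) ≫ db p)
    -- the left convolutions `d : ca → a_m` and `e : cb → b_m`
    (ca cb : D) (dconv : ca ⟶ a m) (econv : cb ⟶ b m)
    (hca : IsLeftConvolution m a da ca dconv) (hcb : IsLeftConvolution m b db cb econv)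
    -- a further morphism `ε : a' ⟶ ca`
    (a' : D) (ε : a' ⟶ ca)
    -- the additional vanishing `Hom(a_p[r], b_q) = 0` for `p > q`, `r > 0`
    (hvanishab : ∀ p q, q < p → p ≤ m → ∀ r : ℤ, 0 < r → ∀ g : (a p)⟦r⟧ ⟶ b q, g = 0) :
    (∃ φ : a' ⟶ cb, φ ≫ econv = ε ≫ dconv ≫ f m) ∧
    ((∀ q, q ≤ m → ∀ r : ℤ, 0 < r → ∀ g : a'⟦r⟧ ⟶ b q, g = 0) →
      ∀ φ₁ φ₂ : a' ⟶ cb, φ₁ ≫ econv = ε ≫ dconv ≫ f m →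
        φ₂ ≫ econv = ε ≫ dconv ≫ f m → φ₁ = φ₂) := by
  obtain ⟨hexists, hunique⟩ := hom_of_left_convolutions_general hf hca hcb ε
    fun p hp q r hr hqr => hvanishab (p + 1) q (by omega) hp r hr
  exact ⟨hexists, fun ha' => hunique fun q r hr hqr => ha' q (by omega) r hr⟩
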